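/- Let t ≥ 1 be an integer, let G be a finite digraph that is t-dispersed, and let u and v be distinct vertices of G. Then all (v,u)-traps of length at most t contain the same out-neighbor of v; that is, if P₁ ∪ Q₁ and P₂ ∪ Q₂ are (v,u)-traps each of length at most t, then the second vertex of the geodesic path P₁ starting at v equals the second vertex of the geodesic path P₂ starting at v. -/

import Mathlib

variable {V : Type*}

/-- `IsDiwalk G a b P` says that `P : Fin (m+1) → V` is a directed walk in the
digraph `G` from `a` to `b` (with `m` edges). -/
def IsDiwalk (G : V → V → Prop) (a b : V) {m : ℕ} (P : Fin (m + 1) → V) : Prop :=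
  P 0 = a ∧ P (Fin.last m) = b ∧ ∀ i : Fin m, G (P i.castSucc) (P i.succ)

/-- The distance `dist(a, b)` in a digraph: the length of a shortest directed
path from `a` to `b` (`⊤` if there is none). -/
noncomputable def ddist (G : V → V → Prop) (a b : V) : ℕ∞ :=
  sInf {n : ℕ∞ | ∃ (m : ℕ) (P : Fin (m + 1) → V), n = (m : ℕ∞) ∧ IsDiwalk G a b P}

/-- A `(v, u)`-trap in a digraph `G`: two internally disjoint geodesic directed
paths, a `(v, x)`-path `P` with at least one edge and a `(u, x)`-path `Q` with
`‖Q‖ ≤ ‖P‖`; if `u = v` both paths must have at least two edges.  The vertex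
`x` is the tip and `‖P‖` is the length of the trap. -/
structure Trap (G : V → V → Prop) (v u : V) where
  /-- the length of the trap, i.e. the number of edges of `P` -/
  lenP : ℕ
  /-- the number of edges of `Q` -/
  lenQ : ℕ
  /-- the tip of the trap -/
  x : V
  P : Fin (lenP + 1) → V
  Q : Fin (lenQ + 1) → V
  one_le_lenP : 1 ≤ lenP
  lenQ_le : lenQ ≤ lenP
  hPinj : Function.Injective P
  hQinj : Function.Injective Q
  hP : IsDiwalk G v x P
  hQ : IsDiwalk G u x Q
  hPgeo : ddist G v x = (lenP : ℕ∞)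
  hQgeo : ddist G u x = (lenQ : ℕ∞)
  disj : ∀ (i : Fin (lenP + 1)) (j : Fin (lenQ + 1)), P i = Q j →
    (i = 0 ∨ i = Fin.last lenP) ∧ (j = 0 ∨ j = Fin.last lenQ)
  eq_case : u = v → 2 ≤ lenP ∧ 2 ≤ lenQ

/-- The vertex set of a trap. -/
def Trap.verts {G : V → V → Prop} {v u : V} (T : Trap G v u) : Set V :=
  Set.range T.P ∪ Set.range T.Q

/-- The (directed) edge set of a trap. -/
def Trap.edges {G : V → V → Prop} {v u : V} (T : Trap G v u) : Set (V × V) :=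
  (Set.range fun i : Fin T.lenP => (T.P i.castSucc, T.P i.succ)) ∪
  (Set.range fun i : Fin T.lenQ => (T.Q i.castSucc, T.Q i.succ))

/-- Two `(v, u)`-traps are internally disjoint if they share no vertices apart
from `v` and `u`, and share no edges. -/
def Trap.InternallyDisjoint {G : V → V → Prop} {v u : V} (T₁ T₂ : Trap G v u) : Prop :=
  T₁.verts ∩ T₂.verts ⊆ {v, u} ∧ Disjoint T₁.edges T₂.edges

/-- The trap distance `ρ*(v, u)`: the minimum length of a `(v, u)`-trap
(`⊤` if there is none). -/
noncomputable def trapDist (G : V → V → Prop) (v u : V) : ℕ∞ :=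
  sInf {n : ℕ∞ | ∃ T : Trap G v u, n = (T.lenP : ℕ∞)}

/-- A digraph `G` is `t`-dispersed if (1) for all distinct vertices `v, u`
there are no two internally disjoint `(v, u)`-traps each of length at most `t`,
and (2) whenever `uv` is an edge of `G` there is no `(v, u)`-trap of length at
most `t`. -/
def Dispersed (G : V → V → Prop) (t : ℕ) : Prop :=
  (∀ v u : V, v ≠ u → ¬∃ T₁ T₂ : Trap G v u,
      T₁.lenP ≤ t ∧ T₂.lenP ≤ t ∧ T₁.InternallyDisjoint T₂) ∧
  (∀ u v : V, G u v → ¬∃ T : Trap G v u, T.lenP ≤ t)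

/-!
Take two pairs of geodesics violating the theorem, with internal disjointness within each pair not
required, so that the total number of edges is smallest.  If two of the four paths met at an
unwanted vertex, truncating them there, or advancing `u` along the second paths, would give a
smaller violation.  Hence the two pairs are internally disjoint traps, which dispersal excludes.
The case of two geodesics from a common vertex that meet again at `w` is covered as well, each of
them being paired with the trivial path at `w`.
-/

section

variable {G : V → V → Prop} {a b c v u w : V} {m n t : ℕ} {p q : ℕ → V}

theorem IsDiwalk.ddist_le {P : Fin (m + 1) → V} (hP : IsDiwalk G a b P) : ddist G a b ≤ m :=
  sInf_le ⟨m, P, rfl, hP⟩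

theorem exists_isDiwalk_of_ddist_eq (h : ddist G a b = n) :
    ∃ P : Fin (n + 1) → V, IsDiwalk G a b P := by
  have hne : {k : ℕ∞ | ∃ (m : ℕ) (P : Fin (m + 1) → V), k = m ∧ IsDiwalk G a b P}.Nonempty := by
    by_contra hempty
    rw [ddist, Set.not_nonempty_iff_eq_empty.1 hempty, sInf_empty] at h
    exact ENat.top_ne_natCast n h
  obtain ⟨m, P, hm, hP⟩ := csInf_mem hne
  obtain rfl : n = m := Nat.cast_injective (h.symm.trans hm)
  exact ⟨P, hP⟩

theorem ddist_self (G : V → V → Prop) (a : V) : ddist G a a = 0 :=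
  nonpos_iff_eq_zero.1 <|
    IsDiwalk.ddist_le (m := 0) (P := fun _ => a) ⟨rfl, rfl, fun i => i.elim0⟩

theorem adj_of_ddist_eq_one (h : ddist G a b = 1) : G a b := by
  obtain ⟨P, hP₀, hP₁, hP⟩ := exists_isDiwalk_of_ddist_eq (n := 1) h
  exact hP₀ ▸ hP₁ ▸ hP 0

theorem IsDiwalk.snoc {P : Fin (m + 1) → V} (hP : IsDiwalk G a b P) (hbc : G b c) :
    IsDiwalk G a c (Fin.snoc P c : Fin (m + 2) → V) := by
  obtain ⟨hP₀, hPm, hP⟩ := hP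
  refine ⟨?_, Fin.snoc_last .., fun i => ?_⟩
  · rw [← Fin.castSucc_zero, Fin.snoc_castSucc, hP₀]
  · induction i using Fin.lastCases with
    | last => simpa only [Fin.snoc_castSucc, Fin.succ_last, Fin.snoc_last, hPm] using hbc
    | cast i => simpa only [Fin.snoc_castSucc, Fin.succ_castSucc] using hP i

theorem ddist_le_add_one (hbc : G b c) : ddist G a c ≤ ddist G a b + 1 := by
  rcases eq_or_ne (ddist G a b) ⊤ with htop | hfin
  · simp only [htop, top_add, le_top]
  · obtain ⟨n, hn⟩ := ENat.ne_top_iff_exists.1 hfin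
    obtain ⟨P, hP⟩ := exists_isDiwalk_of_ddist_eq hn.symm
    simpa only [← hn, Nat.cast_add, Nat.cast_one] using (hP.snoc hbc).ddist_le

theorem ddist_le_add_of_adj {i k : ℕ} (hp : ∀ j < i + k, G (p j) (p (j + 1))) :
    ddist G a (p (i + k)) ≤ ddist G a (p i) + k := by
  induction k with
  | zero => simp only [add_zero, Nat.cast_zero, le_refl]
  | succ k ih =>
    calc ddist G a (p (i + k + 1)) ≤ ddist G a (p (i + k)) + 1 :=
          ddist_le_add_one (hp _ (by omega))
      _ ≤ ddist G a (p i) + k + 1 := by gcongr; exact ih fun j hj => hp j (by omega)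
      _ = ddist G a (p i) + (k + 1 : ℕ) := by rw [add_assoc, Nat.cast_add, Nat.cast_one]

theorem IsDiwalk.adj_clamp {P : Fin (m + 1) → V} (hP : IsDiwalk G a b P) {i : ℕ} (hi : i < m) :
    G (P (Fin.clamp i m)) (P (Fin.clamp (i + 1) m)) := by
  have hcast : Fin.clamp i m = Fin.castSucc ⟨i, hi⟩ := Fin.ext (min_eq_left hi.le)
  have hsucc : Fin.clamp (i + 1) m = Fin.succ ⟨i, hi⟩ := Fin.ext (min_eq_left hi)
  exact hcast ▸ hsucc ▸ hP.2.2 ⟨i, hi⟩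

theorem IsDiwalk.clamp_zero {P : Fin (m + 1) → V} (hP : IsDiwalk G a b P) :
    P (Fin.clamp 0 m) = a := by
  rw [← hP.1]
  exact congrArg P (Fin.ext (Nat.zero_min m))

theorem IsDiwalk.clamp_last {P : Fin (m + 1) → V} (hP : IsDiwalk G a b P) :
    P (Fin.clamp m m) = b := by
  rw [← hP.2.1]
  exact congrArg P (Fin.ext (min_self m))

theorem ddist_triangle (G : V → V → Prop) (a b c : V) :
    ddist G a c ≤ ddist G a b + ddist G b c := by
  rcases eq_or_ne (ddist G b c) ⊤ with htop | hfin
  · simp only [htop, add_top, le_top]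
  · obtain ⟨n, hn⟩ := ENat.ne_top_iff_exists.1 hfin
    obtain ⟨P, hP⟩ := exists_isDiwalk_of_ddist_eq hn.symm
    have hle := ddist_le_add_of_adj (a := a) (i := 0) (k := n) (p := fun i => P (Fin.clamp i n))
      fun j hj => hP.adj_clamp (by omega)
    simpa only [zero_add, hP.clamp_zero, hP.clamp_last, hn] using hle

theorem ddist_le_of_adj {i k : ℕ} (hp : ∀ j < i + k, G (p j) (p (j + 1))) :
    ddist G (p i) (p (i + k)) ≤ k := by
  simpa only [ddist_self, zero_add] using ddist_le_add_of_adj (a := p i) hp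

/-- The vertices `p 0, …, p m` form a geodesic path.  Values of `p` beyond `m` are irrelevant, and
the path is described by its distances, so that subpaths are geodesic by definition. -/
def IsGeodesic (G : V → V → Prop) (m : ℕ) (p : ℕ → V) : Prop :=
  ∀ i k, i + k ≤ m → ddist G (p i) (p (i + k)) = k

theorem isGeodesic_of_adj (hp : ∀ i < m, G (p i) (p (i + 1))) (hm : ddist G (p 0) (p m) = m) :
    IsGeodesic G m p := by
  intro i k hik
  have hinit : ddist G (p 0) (p i) ≤ i := by
    simpa only [zero_add] using ddist_le_of_adj (i := 0) (k := i) fun j hj => hp j (by omega)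
  have hmid : ddist G (p i) (p (i + k)) ≤ k :=
    ddist_le_of_adj fun j hj => hp j (by omega)
  have hfinal : ddist G (p (i + k)) (p m) ≤ (m - (i + k) : ℕ) := by
    simpa only [Nat.add_sub_cancel' hik] using
      ddist_le_of_adj (i := i + k) (k := m - (i + k)) fun j hj => hp j (by omega)
  have hsum : (m : ℕ∞) ≤ i + ddist G (p i) (p (i + k)) + (m - (i + k) : ℕ) :=
    calc (m : ℕ∞) = ddist G (p 0) (p m) := hm.symm
      _ ≤ ddist G (p 0) (p (i + k)) + ddist G (p (i + k)) (p m) := ddist_triangle ..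
      _ ≤ ddist G (p 0) (p i) + ddist G (p i) (p (i + k)) + ddist G (p (i + k)) (p m) := by
          gcongr; exact ddist_triangle ..
      _ ≤ i + ddist G (p i) (p (i + k)) + (m - (i + k) : ℕ) := by gcongr
  obtain ⟨d, hd⟩ := ENat.ne_top_iff_exists.1 (ne_top_of_le_ne_top (ENat.natCast_ne_top k) hmid)
  rw [← hd] at hmid hsum ⊢
  norm_cast at hmid hsum ⊢
  omega

theorem IsDiwalk.isGeodesic {P : Fin (m + 1) → V} (hP : IsDiwalk G a b P)
    (hm : ddist G a b = m) : IsGeodesic G m fun i => P (Fin.clamp i m) :=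
  isGeodesic_of_adj (fun _ hi => hP.adj_clamp hi) (by rw [hP.clamp_zero, hP.clamp_last, hm])

namespace IsGeodesic

theorem take (hp : IsGeodesic G m p) (hn : n ≤ m) : IsGeodesic G n p :=
  fun i k hik => hp i k (hik.trans hn)

theorem drop {j : ℕ} (hp : IsGeodesic G m p) (hj : j ≤ m) :
    IsGeodesic G (m - j) fun i => p (j + i) :=
  fun i k hik => by simpa only [add_assoc] using hp (j + i) k (by omega)

theorem const (G : V → V → Prop) (w : V) : IsGeodesic G 0 fun _ => w := by
  rintro i k hik
  obtain rfl : k = 0 := by omega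
  exact ddist_self G w

theorem ddist_eq (hp : IsGeodesic G m p) {i : ℕ} (hi : i ≤ m) : ddist G (p 0) (p i) = i := by
  simpa only [zero_add] using hp 0 i (by omega)

theorem adj (hp : IsGeodesic G m p) {i : ℕ} (hi : i < m) : G (p i) (p (i + 1)) :=
  adj_of_ddist_eq_one (hp i 1 hi)

theorem isDiwalk (hp : IsGeodesic G m p) (ha : p 0 = a) (hb : p m = b) :
    IsDiwalk G a b fun i : Fin (m + 1) => p i :=
  ⟨ha, hb, fun i => hp.adj i.isLt⟩

theorem index_eq (hp : IsGeodesic G m p) (hq : IsGeodesic G n q) (h₀ : p 0 = q 0) {i j : ℕ}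
    (hi : i ≤ m) (hj : j ≤ n) (h : p i = q j) : i = j := by
  have hij : (i : ℕ∞) = j := by rw [← hp.ddist_eq hi, ← hq.ddist_eq hj, h₀, h]
  exact_mod_cast hij

theorem injective (hp : IsGeodesic G m p) : Function.Injective fun i : Fin (m + 1) => p i :=
  fun i j hij => Fin.ext (hp.index_eq hp rfl i.is_le j.is_le hij)

end IsGeodesic

/-- A `(v, u)`-trap whose two geodesics are not required to be internally disjoint, and whose paths
are indexed by natural numbers, so that passing to subpaths does not change the index type. -/
structure PreTrap (G : V → V → Prop) (v u : V) where
  lenP : ℕ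
  lenQ : ℕ
  P : ℕ → V
  Q : ℕ → V
  P_zero : P 0 = v
  Q_zero : Q 0 = u
  geodesic_P : IsGeodesic G lenP P
  geodesic_Q : IsGeodesic G lenQ Q
  lenQ_le : lenQ ≤ lenP
  tip : P lenP = Q lenQ

/-- Forget that the two paths of a trap are internally disjoint. -/
def Trap.toPreTrap (T : Trap G v u) : PreTrap G v u where
  lenP := T.lenP
  lenQ := T.lenQ
  P i := T.P (Fin.clamp i T.lenP)
  Q i := T.Q (Fin.clamp i T.lenQ)
  P_zero := T.hP.clamp_zero
  Q_zero := T.hQ.clamp_zero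
  geodesic_P := T.hP.isGeodesic T.hPgeo
  geodesic_Q := T.hQ.isGeodesic T.hQgeo
  lenQ_le := T.lenQ_le
  tip := T.hP.clamp_last.trans T.hQ.clamp_last.symm

theorem Trap.toPreTrap_P_one (T : Trap G v u) : T.toPreTrap.P 1 = T.P 1 :=
  congrArg T.P <| Fin.ext <| (min_eq_left T.one_le_lenP).trans
    (Nat.mod_eq_of_lt (Nat.lt_succ_of_le T.one_le_lenP)).symm

namespace PreTrap

/-- A geodesic from `v` to `w`, paired with the trivial path at `w`. -/
def ofGeodesic (hp : IsGeodesic G m p) (hv : p 0 = v) (hw : p m = w) : PreTrap G v w where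
  lenP := m
  lenQ := 0
  P := p
  Q _ := w
  P_zero := hv
  Q_zero := rfl
  geodesic_P := hp
  geodesic_Q := .const G w
  lenQ_le := m.zero_le
  tip := hw

variable (T : PreTrap G v u)

theorem add_lenQ_eq_add_lenP {i j : ℕ} (hi : i ≤ T.lenP) (hj : j ≤ T.lenQ) (h : T.P i = T.Q j) :
    i + T.lenQ = j + T.lenP := by
  have hP := T.geodesic_P i (T.lenP - i) (by omega)
  have hQ := T.geodesic_Q j (T.lenQ - j) (by omega)
  rw [Nat.add_sub_cancel' hi, T.tip, h] at hP
  rw [Nat.add_sub_cancel' hj, hP] at hQ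
  norm_cast at hQ
  omega

theorem one_le_lenP (hvu : v ≠ u) : 1 ≤ T.lenP := by
  by_contra! hlt
  have hQ := T.lenQ_le
  refine hvu (T.P_zero.symm.trans (Eq.trans ?_ T.Q_zero))
  simpa only [show T.lenP = 0 by omega, show T.lenQ = 0 by omega] using T.tip

theorem Q_ne_start (hvu : v ≠ u) {j : ℕ} (hj : j ≤ T.lenQ) : T.Q j ≠ v := by
  intro h
  have hlen := T.add_lenQ_eq_add_lenP (Nat.zero_le _) hj (T.P_zero.trans h.symm)
  have hQ := T.lenQ_le
  obtain rfl : j = 0 := by omega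
  exact hvu (h.symm.trans T.Q_zero)

/-- Cut both paths at a common vertex. -/
def take {i j : ℕ} (hi : i ≤ T.lenP) (hj : j ≤ T.lenQ) (h : T.P i = T.Q j) : PreTrap G v u where
  lenP := i
  lenQ := j
  P := T.P
  Q := T.Q
  P_zero := T.P_zero
  Q_zero := T.Q_zero
  geodesic_P := T.geodesic_P.take hi
  geodesic_Q := T.geodesic_Q.take hj
  lenQ_le := by
    have hlen := T.add_lenQ_eq_add_lenP hi hj h
    have hQ := T.lenQ_le
    omega
  tip := h

/-- Start the second path at its `j`-th vertex `w` instead of at `u`. -/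
def dropQ {j : ℕ} (hj : j ≤ T.lenQ) (hw : T.Q j = w) : PreTrap G v w where
  lenP := T.lenP
  lenQ := T.lenQ - j
  P := T.P
  Q i := T.Q (j + i)
  P_zero := T.P_zero
  Q_zero := hw
  geodesic_P := T.geodesic_P
  geodesic_Q := T.geodesic_Q.drop hj
  lenQ_le := (Nat.sub_le _ _).trans T.lenQ_le
  tip := by rw [Nat.add_sub_cancel' hj, T.tip]

/-- The paths of the pre-trap meet only at the tip. -/
def MeetsOnlyAtTip : Prop :=
  ∀ i ≤ T.lenP, ∀ j ≤ T.lenQ, T.P i = T.Q j → i = T.lenP ∧ j = T.lenQ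

/-- The trap formed by two geodesics that meet only at the tip. -/
def toTrap (hvu : v ≠ u) (hT : T.MeetsOnlyAtTip) : Trap G v u where
  lenP := T.lenP
  lenQ := T.lenQ
  x := T.P T.lenP
  P i := T.P i
  Q j := T.Q j
  one_le_lenP := T.one_le_lenP hvu
  lenQ_le := T.lenQ_le
  hPinj := T.geodesic_P.injective
  hQinj := T.geodesic_Q.injective
  hP := T.geodesic_P.isDiwalk T.P_zero rfl
  hQ := T.geodesic_Q.isDiwalk T.Q_zero T.tip.symm
  hPgeo := by rw [← T.geodesic_P.ddist_eq le_rfl, T.P_zero]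
  hQgeo := by rw [← T.geodesic_Q.ddist_eq le_rfl, T.Q_zero, T.tip]
  disj i j hij :=
    have h := hT i i.is_le j j.is_le hij
    ⟨.inr (Fin.ext h.1), .inr (Fin.ext h.2)⟩
  eq_case h := absurd h.symm hvu

theorem toTrap_P_one (hvu : v ≠ u) (hT : T.MeetsOnlyAtTip) : (T.toTrap hvu hT).P 1 = T.P 1 :=
  congrArg T.P (Nat.mod_eq_of_lt (Nat.lt_succ_of_le (T.one_le_lenP hvu)))

end PreTrap

namespace Trap

variable {T₁ T₂ : Trap G v u} (T : Trap G v u)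

theorem mem_verts_of_mem_edges (h : (a, b) ∈ T.edges) : a ∈ T.verts ∧ b ∈ T.verts := by
  rcases h with ⟨i, hi⟩ | ⟨j, hj⟩
  · obtain ⟨rfl, rfl⟩ := Prod.mk.inj hi
    exact ⟨.inl ⟨_, rfl⟩, .inl ⟨_, rfl⟩⟩
  · obtain ⟨rfl, rfl⟩ := Prod.mk.inj hj
    exact ⟨.inr ⟨_, rfl⟩, .inr ⟨_, rfl⟩⟩

theorem Q_ne_start (hvu : v ≠ u) (j : Fin (T.lenQ + 1)) : T.Q j ≠ v := by
  have hj : Fin.clamp j T.lenQ = j := Fin.ext (min_eq_left j.is_le)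
  have hne : T.Q (Fin.clamp j T.lenQ) ≠ v := T.toPreTrap.Q_ne_start hvu j.is_le
  rwa [hj] at hne

theorem eq_P_one_of_mem_edges (hvu : v ≠ u) (h : (a, b) ∈ T.edges)
    (ha : a ∈ ({v, u} : Set V)) (hb : b ∈ ({v, u} : Set V)) : b = T.P 1 := by
  rcases h with ⟨i, hi⟩ | ⟨j, hj⟩
  · obtain ⟨rfl, rfl⟩ := Prod.mk.inj hi
    have hb' : T.P i.succ = u :=
      hb.resolve_left fun hv => Fin.succ_ne_zero i (T.hPinj (hv.trans T.hP.1.symm))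
    have ha' : T.P i.castSucc = v :=
      ha.resolve_right fun hu => i.castSucc_lt_succ.ne (T.hPinj (hu.trans hb'.symm))
    have hi₀ : (i : ℕ) = 0 := congrArg Fin.val (T.hPinj (ha'.trans T.hP.1.symm))
    refine congrArg T.P (Fin.ext ?_)
    rw [Fin.val_succ, hi₀, Fin.val_one', Nat.mod_eq_of_lt (Nat.lt_succ_of_le T.one_le_lenP)]
  · obtain ⟨rfl, rfl⟩ := Prod.mk.inj hj
    have hb' : T.Q j.succ = u := hb.resolve_left (T.Q_ne_start hvu _)
    exact absurd (T.hQinj (hb'.trans T.hQ.1.symm)) (Fin.succ_ne_zero j)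

theorem internallyDisjoint_of_verts_inter_subset (hvu : v ≠ u) (hP : T₁.P 1 ≠ T₂.P 1)
    (h : T₁.verts ∩ T₂.verts ⊆ {v, u}) : T₁.InternallyDisjoint T₂ := by
  refine ⟨h, Set.disjoint_left.2 ?_⟩
  rintro ⟨a, b⟩ h₁ h₂
  obtain ⟨ha₁, hb₁⟩ := T₁.mem_verts_of_mem_edges h₁
  obtain ⟨ha₂, hb₂⟩ := T₂.mem_verts_of_mem_edges h₂
  have ha : a ∈ ({v, u} : Set V) := h ⟨ha₁, ha₂⟩
  have hb : b ∈ ({v, u} : Set V) := h ⟨hb₁, hb₂⟩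
  exact hP ((T₁.eq_P_one_of_mem_edges hvu h₁ ha hb).symm.trans
    (T₂.eq_P_one_of_mem_edges hvu h₂ ha hb))

end Trap

namespace PreTrap

/-- The total number of edges, on which the choice of a smallest counterexample is based. -/
def size (T : PreTrap G v u) : ℕ := T.lenP + T.lenQ

/-- Two pre-traps of length at most `t` that leave `v` through different out-neighbors; that is, a
counterexample to the theorem with internal disjointness disregarded. -/
structure Conflict (t : ℕ) (T₁ T₂ : PreTrap G v u) : Prop where
  ne : v ≠ u
  lenP_le_left : T₁.lenP ≤ t
  lenP_le_right : T₂.lenP ≤ t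
  P_one_ne : T₁.P 1 ≠ T₂.P 1

/-- A conflict of smallest total size among all conflicts in `G`, whatever their end vertices. -/
structure MinimalConflict (t : ℕ) (T₁ T₂ : PreTrap G v u) : Prop extends Conflict t T₁ T₂ where
  minimal : ∀ ⦃v' u' : V⦄ (S₁ S₂ : PreTrap G v' u'), Conflict t S₁ S₂ →
    T₁.size + T₂.size ≤ S₁.size + S₂.size

theorem exists_minimalConflict {T₁ T₂ : PreTrap G v u} (h : Conflict t T₁ T₂) :
    ∃ (v' u' : V) (S₁ S₂ : PreTrap G v' u'), MinimalConflict t S₁ S₂ := by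
  induction hn : T₁.size + T₂.size using Nat.strong_induction_on generalizing v u T₁ T₂ with
  | _ n ih =>
    by_contra! hmin
    refine hmin v u T₁ T₂ ⟨h, fun v' u' S₁ S₂ hS => not_lt.1 fun hlt => ?_⟩
    obtain ⟨v'', u'', R₁, R₂, hR⟩ := ih _ (hn ▸ hlt) hS rfl
    exact hmin v'' u'' R₁ R₂ hR

namespace MinimalConflict

variable {T₁ T₂ : PreTrap G v u}

theorem symm (h : MinimalConflict t T₁ T₂) : MinimalConflict t T₂ T₁ where
  ne := h.ne
  lenP_le_left := h.lenP_le_right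
  lenP_le_right := h.lenP_le_left
  P_one_ne := h.P_one_ne.symm
  minimal _ _ S₁ S₂ hS := add_comm T₁.size _ ▸ h.minimal S₁ S₂ hS

theorem meetsOnlyAtTip_left (h : MinimalConflict t T₁ T₂) : T₁.MeetsOnlyAtTip := by
  intro i hi j hj hij
  have hsize := h.minimal (T₁.take hi hj hij) T₂
    ⟨h.ne, hi.trans h.lenP_le_left, h.lenP_le_right, h.P_one_ne⟩
  simp only [size, take] at hsize
  omega

theorem P_eq_of_P_eq_P (h : MinimalConflict t T₁ T₂) {i j : ℕ} (hi₁ : 1 ≤ i)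
    (hi : i ≤ T₁.lenP) (hj : j ≤ T₂.lenP) (hij : T₁.P i = T₂.P j) : T₁.P i = u := by
  obtain rfl := T₁.geodesic_P.index_eq T₂.geodesic_P (T₁.P_zero.trans T₂.P_zero.symm) hi hj hij
  have hne : v ≠ T₁.P i := fun hv => by
    have := T₁.geodesic_P.index_eq T₁.geodesic_P rfl (Nat.zero_le _) hi (T₁.P_zero.trans hv)
    omega
  have hsize := h.minimal (ofGeodesic (T₁.geodesic_P.take hi) T₁.P_zero rfl)
    (ofGeodesic (T₂.geodesic_P.take hj) T₂.P_zero hij.symm)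
    ⟨hne, hi.trans h.lenP_le_left, hj.trans h.lenP_le_right, h.P_one_ne⟩
  simp only [size, ofGeodesic] at hsize
  rw [show i = T₁.lenP by omega, T₁.tip, show T₁.lenQ = 0 by omega, T₁.Q_zero]

theorem P_ne_Q (h : MinimalConflict t T₁ T₂) {i j : ℕ} (hi : i ≤ T₁.lenP) (hj₁ : 1 ≤ j)
    (hj : j ≤ T₂.lenQ) : T₁.P i ≠ T₂.Q j := by
  intro hij
  have hsize := h.minimal (ofGeodesic (T₁.geodesic_P.take hi) T₁.P_zero hij) (T₂.dropQ hj rfl)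
    ⟨(T₂.Q_ne_start h.ne hj).symm, hi.trans h.lenP_le_left, h.lenP_le_right, h.P_one_ne⟩
  simp only [size, ofGeodesic, dropQ] at hsize
  omega

theorem Q_one_ne (h : MinimalConflict t T₁ T₂) (h₁ : 1 ≤ T₁.lenQ) (h₂ : 1 ≤ T₂.lenQ) :
    T₁.Q 1 ≠ T₂.Q 1 := by
  intro hQ
  have hsize := h.minimal (T₁.dropQ h₁ rfl) (T₂.dropQ h₂ hQ.symm)
    ⟨(T₁.Q_ne_start h.ne h₁).symm, h.lenP_le_left, h.lenP_le_right, h.P_one_ne⟩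
  simp only [size, dropQ] at hsize
  omega

theorem Q_ne_Q (h : MinimalConflict t T₁ T₂) {i j : ℕ} (hi₁ : 1 ≤ i) (hi : i ≤ T₁.lenQ)
    (hj : j ≤ T₂.lenQ) : T₁.Q i ≠ T₂.Q j := by
  intro hij
  obtain rfl := T₁.geodesic_Q.index_eq T₂.geodesic_Q (T₁.Q_zero.trans T₂.Q_zero.symm) hi hj hij
  have hne : u ≠ T₁.Q i := fun hu => by
    have := T₁.geodesic_Q.index_eq T₁.geodesic_Q rfl (Nat.zero_le _) hi (T₁.Q_zero.trans hu)
    omega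
  have hQ₁ := T₁.lenQ_le
  have hQ₂ := T₂.lenQ_le
  have hsize := h.minimal (ofGeodesic (T₁.geodesic_Q.take hi) T₁.Q_zero rfl)
    (ofGeodesic (T₂.geodesic_Q.take hj) T₂.Q_zero hij.symm)
    ⟨hne, hi.trans (hQ₁.trans h.lenP_le_left), hj.trans (hQ₂.trans h.lenP_le_right),
      h.Q_one_ne (hi₁.trans hi) (hi₁.trans hj)⟩
  have hP₁ := T₁.one_le_lenP h.ne
  simp only [size, ofGeodesic] at hsize
  omega

theorem verts_inter_subset (h : MinimalConflict t T₁ T₂) (h₁ : T₁.MeetsOnlyAtTip)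
    (h₂ : T₂.MeetsOnlyAtTip) :
    (T₁.toTrap h.ne h₁).verts ∩ (T₂.toTrap h.ne h₂).verts ⊆ {v, u} := by
  rintro w ⟨⟨i, rfl⟩ | ⟨i, rfl⟩, ⟨j, hij⟩ | ⟨j, hij⟩⟩
  · obtain hi | hi := Nat.eq_zero_or_pos i
    · exact .inl ((congrArg T₁.P hi).trans T₁.P_zero)
    · exact .inr (h.P_eq_of_P_eq_P hi i.is_le j.is_le hij.symm)
  · obtain hj | hj := Nat.eq_zero_or_pos j
    · exact .inr (hij.symm.trans ((congrArg T₂.Q hj).trans T₂.Q_zero))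
    · exact absurd hij.symm (h.P_ne_Q i.is_le hj j.is_le)
  · obtain hi | hi := Nat.eq_zero_or_pos i
    · exact .inr ((congrArg T₁.Q hi).trans T₁.Q_zero)
    · exact absurd hij (h.symm.P_ne_Q j.is_le hi i.is_le)
  · obtain hi | hi := Nat.eq_zero_or_pos i
    · exact .inr ((congrArg T₁.Q hi).trans T₁.Q_zero)
    · exact absurd hij.symm (h.Q_ne_Q hi i.is_le j.is_le)

theorem exists_internallyDisjoint (h : MinimalConflict t T₁ T₂) :
    ∃ S₁ S₂ : Trap G v u, S₁.lenP ≤ t ∧ S₂.lenP ≤ t ∧ S₁.InternallyDisjoint S₂ := by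
  have h₁ := h.meetsOnlyAtTip_left
  have h₂ := h.symm.meetsOnlyAtTip_left
  refine ⟨T₁.toTrap h.ne h₁, T₂.toTrap h.ne h₂, h.lenP_le_left, h.lenP_le_right,
    Trap.internallyDisjoint_of_verts_inter_subset h.ne ?_ (h.verts_inter_subset h₁ h₂)⟩
  rw [toTrap_P_one, toTrap_P_one]
  exact h.P_one_ne

end MinimalConflict

end PreTrap

theorem traps_same_outneighbor_general
    (hG : ∀ v u : V, v ≠ u → ¬∃ T₁ T₂ : Trap G v u,
      T₁.lenP ≤ t ∧ T₂.lenP ≤ t ∧ T₁.InternallyDisjoint T₂)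
    (hvu : v ≠ u) (T₁ T₂ : Trap G v u) (h₁ : T₁.lenP ≤ t) (h₂ : T₂.lenP ≤ t) :
    T₁.P 1 = T₂.P 1 := by
  by_contra hP
  rw [← T₁.toPreTrap_P_one, ← T₂.toPreTrap_P_one] at hP
  obtain ⟨v', u', S₁, S₂, hS⟩ := PreTrap.exists_minimalConflict ⟨hvu, h₁, h₂, hP⟩
  exact hG v' u' hS.ne hS.exists_internallyDisjoint

end

/-- If `t ≥ 1`, `G` is a finite `t`-dispersed digraph and
`u ≠ v`, then all `(v, u)`-traps of length at most `t` contain the same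
out-neighbor of `v`: the second vertices of their first geodesics agree. -/
theorem traps_same_outneighbor [Fintype V] (G : V → V → Prop)
    (t : ℕ) (ht : 1 ≤ t) (hdisp : Dispersed G t)
    (v u : V) (hvu : v ≠ u) (T₁ T₂ : Trap G v u)
    (h₁ : T₁.lenP ≤ t) (h₂ : T₂.lenP ≤ t) :
    T₁.P 1 = T₂.P 1 :=
  traps_same_outneighbor_general hdisp.1 hvu T₁ T₂ h₁ h₂
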